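/- (Single-tuple transformation, case v ∉ q_{ij}.) Let r and s be pr-relations, let (v, h) ∈ r with v ∉ T(s), and set r' := r \ {(v, h)} and s' := s ∪ {(v, h)}. Let A ⊆ T(r) with v ∉ A and B ⊆ T(s). Then for every assignment μ: φ^r_A μ = φ^{r'}_A μ ∧ (¬ h μ), ψ^{s'}_B μ = ψ^s_B μ ∧ (¬ h μ), and consequently φ^r_A μ ∧ ψ^s_B μ = φ^{r'}_A μ ∧ ψ^{s'}_B μ; i.e., the event-variable formulas φ^r_A ∧ ψ^s_B and φ^{r'}_A ∧ ψ^{s'}_B are logically equivalent. -/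

import Mathlib

/-!
An event-variable formula is a conjunction with one conjunct per pair of its relation, and the
conjunct of `(v, h)` is `¬ h` for every set of tuples that omits `v`. Both `A` and `B` omit `v`, so
moving `(v, h)` from `r` to `s` only moves the conjunct `¬ h` from `φ` to `ψ`.
-/

open scoped Classical

variable {Var Tup : Type*}

/-- A pr-relation is functional: each tuple occurs in at most one tuple–formula pair. -/
def Functional (r : Set (Tup × ((Var → Bool) → Bool))) : Prop :=
  ∀ t (f g : (Var → Bool) → Bool), (t, f) ∈ r → (t, g) ∈ r → f = g

/-- The tuple set `T(r)` of a pr-relation: the set of first components. -/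
def tupleSet (r : Set (Tup × ((Var → Bool) → Bool))) : Set Tup :=
  Prod.fst '' r

/-- The possible world `r_μ` of a pr-relation under an assignment `μ`. -/
def world (r : Set (Tup × ((Var → Bool) → Bool))) (μ : Var → Bool) : Set Tup :=
  { t | ∃ f : (Var → Bool) → Bool, (t, f) ∈ r ∧ f μ = true }

/-- The possible worlds `PW(r)` of a pr-relation. -/
def PW (r : Set (Tup × ((Var → Bool) → Bool))) : Set (Set Tup) :=
  { A | ∃ μ : Var → Bool, A = world r μ }

/-- `A ⊆ T` and `B ⊆ T'` are compatible if `A ∩ (T ∩ T') = B ∩ (T ∩ T')`. -/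
def Compatible (T T' A B : Set Tup) : Prop :=
  A ∩ (T ∩ T') = B ∩ (T ∩ T')

/-- A formula depends only on the variables in `V`. -/
def DependsOnly (f : (Var → Bool) → Bool) (V : Set Var) : Prop :=
  ∀ μ μ' : Var → Bool, (∀ v ∈ V, μ v = μ' v) → f μ = f μ'

/-- The tuple–formula pairs of the integration `q = r ⊎ s`: pairs of `r`, together with
the pairs of `s` whose tuple is not a tuple of `r` (for common tuples the formula is
taken from `r`). -/
def integ (r s : Set (Tup × ((Var → Bool) → Bool))) :
    Set (Tup × ((Var → Bool) → Bool)) :=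
  r ∪ { p | p ∈ s ∧ p.1 ∉ tupleSet r }

/-- The event constraints of the integration `q = r ⊎ s`: the pairs `(f_t, g_t)` for
each common tuple `t`, where `f_t` and `g_t` are the formulas of `t` in `r` and `s`. -/
def integConstraints (r s : Set (Tup × ((Var → Bool) → Bool))) :
    Set (((Var → Bool) → Bool) × ((Var → Bool) → Bool)) :=
  { fg | ∃ t : Tup, (t, fg.1) ∈ r ∧ (t, fg.2) ∈ s }

/-- An assignment is valid for the integration `r ⊎ s` if it satisfies every event
constraint `f_t ≡ g_t` coming from a common tuple `t`. -/
def ValidInteg (r s : Set (Tup × ((Var → Bool) → Bool))) (μ : Var → Bool) : Prop :=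
  ∀ t (f g : (Var → Bool) → Bool), (t, f) ∈ r → (t, g) ∈ s → f μ = g μ

/-- The possible worlds of the integration `r ⊎ s` (over valid assignments). -/
def PWinteg (r s : Set (Tup × ((Var → Bool) → Bool))) : Set (Set Tup) :=
  { A | ∃ μ : Var → Bool, ValidInteg r s μ ∧ A = world (integ r s) μ }

/-- An assignment is valid for a set of event constraints. -/
def ValidEpr (C : Set (((Var → Bool) → Bool) × ((Var → Bool) → Bool)))
    (μ : Var → Bool) : Prop :=
  ∀ f g : (Var → Bool) → Bool, (f, g) ∈ C → f μ = g μ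

/-- The possible worlds of an epr-relation `q` with event constraints `C`. -/
def PWepr (q : Set (Tup × ((Var → Bool) → Bool)))
    (C : Set (((Var → Bool) → Bool) × ((Var → Bool) → Bool))) : Set (Set Tup) :=
  { A | ∃ μ : Var → Bool, ValidEpr C μ ∧ A = world q μ }

/-- The event-variable formula `φ^r_A` of a relation `A ⊆ T(r)`:
`φ^r_A μ = true` iff `f μ = true` for every `(t, f) ∈ r` with `t ∈ A` and
`f μ = false` for every `(t, f) ∈ r` with `t ∉ A`. -/
noncomputable def evf (r : Set (Tup × ((Var → Bool) → Bool))) (A : Set Tup) :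
    (Var → Bool) → Bool :=
  fun μ => decide (∀ (t : Tup) (f : (Var → Bool) → Bool), (t, f) ∈ r → (f μ = true ↔ t ∈ A))

/-- The event-variable formula `Ξ^q_A` of `A ⊆ T(q)` for an epr-relation `q` with
event constraints `C` (conjoining all event constraints). -/
noncomputable def eevf (q : Set (Tup × ((Var → Bool) → Bool)))
    (C : Set (((Var → Bool) → Bool) × ((Var → Bool) → Bool))) (A : Set Tup) :
    (Var → Bool) → Bool :=
  fun μ => decide (ValidEpr C μ ∧
    ∀ (t : Tup) (h : (Var → Bool) → Bool), (t, h) ∈ q → (h μ = true ↔ t ∈ A))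

section EventVariableFormula

variable {r : Set (Tup × ((Var → Bool) → Bool))} {A B : Set Tup}
  {v : Tup} {h : (Var → Bool) → Bool}

theorem evf_eq_true_iff {μ : Var → Bool} :
    evf r A μ = true ↔ ∀ t f, (t, f) ∈ r → (f μ = true ↔ t ∈ A) :=
  decide_eq_true_iff

theorem evf_union (r s : Set (Tup × ((Var → Bool) → Bool))) (A : Set Tup) (μ : Var → Bool) :
    evf (r ∪ s) A μ = (evf r A μ && evf s A μ) := by
  rw [Bool.eq_iff_iff, Bool.and_eq_true]
  simp only [evf_eq_true_iff, Set.mem_union, or_imp, forall_and]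

theorem evf_singleton_of_notMem (hvA : v ∉ A) (h : (Var → Bool) → Bool) (μ : Var → Bool) :
    evf {(v, h)} A μ = !h μ := by
  rw [Bool.eq_iff_iff, evf_eq_true_iff]
  simp [hvA]

theorem evf_union_singleton_of_notMem (hvA : v ∉ A) (r : Set (Tup × ((Var → Bool) → Bool)))
    (h : (Var → Bool) → Bool) (μ : Var → Bool) :
    evf (r ∪ {(v, h)}) A μ = (evf r A μ && !h μ) := by
  rw [evf_union, evf_singleton_of_notMem hvA]

theorem evf_eq_evf_sdiff_singleton_and_not (hvr : (v, h) ∈ r) (hvA : v ∉ A) (μ : Var → Bool) :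
    evf r A μ = (evf (r \ {(v, h)}) A μ && !h μ) := by
  rw [← evf_union_singleton_of_notMem hvA,
    Set.sdiff_union_of_subset (Set.singleton_subset_iff.mpr hvr)]

theorem single_tuple_transformation_not_mem_general (hvr : (v, h) ∈ r) (hvA : v ∉ A)
    (hvB : v ∉ B) (s : Set (Tup × ((Var → Bool) → Bool))) (μ : Var → Bool) :
    evf r A μ = (evf (r \ {(v, h)}) A μ && !h μ) ∧
    evf (s ∪ {(v, h)}) B μ = (evf s B μ && !h μ) ∧
    (evf r A μ && evf s B μ) = (evf (r \ {(v, h)}) A μ && evf (s ∪ {(v, h)}) B μ) := by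
  have hr := evf_eq_evf_sdiff_singleton_and_not hvr hvA μ
  have hs := evf_union_singleton_of_notMem hvB s h μ
  refine ⟨hr, hs, ?_⟩
  calc (evf r A μ && evf s B μ)
      = (evf (r \ {(v, h)}) A μ && !h μ && evf s B μ) := by rw [hr]
    _ = (evf (r \ {(v, h)}) A μ && (evf s B μ && !h μ)) := by
        rw [Bool.and_assoc, Bool.and_comm (!h μ)]
    _ = (evf (r \ {(v, h)}) A μ && evf (s ∪ {(v, h)}) B μ) := by rw [hs]

end EventVariableFormula

/-- Single-tuple transformation, case `v ∉ q_{ij}`: with `r' = r \ {(v, h)}` and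
`s' = s ∪ {(v, h)}`, for `A ⊆ T(r)` with `v ∉ A` and `B ⊆ T(s)`,
`φ^r_A μ = φ^{r'}_A μ ∧ ¬ h μ`, `ψ^{s'}_B μ = ψ^s_B μ ∧ ¬ h μ`, and hence
`φ^r_A ∧ ψ^s_B` and `φ^{r'}_A ∧ ψ^{s'}_B` are logically equivalent. -/
theorem single_tuple_transformation_not_mem
    (r s : Set (Tup × ((Var → Bool) → Bool)))
    (hrFin : r.Finite) (hsFin : s.Finite)
    (hrFun : Functional r) (hsFun : Functional s)
    (v : Tup) (h : (Var → Bool) → Bool)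
    (hvr : (v, h) ∈ r) (hvs : v ∉ tupleSet s)
    (A : Set Tup) (hA : A ⊆ tupleSet r) (hvA : v ∉ A)
    (B : Set Tup) (hB : B ⊆ tupleSet s)
    (μ : Var → Bool) :
    evf r A μ = (evf (r \ {(v, h)}) A μ && !(h μ)) ∧
    evf (s ∪ {(v, h)}) B μ = (evf s B μ && !(h μ)) ∧
    (evf r A μ && evf s B μ) =
      (evf (r \ {(v, h)}) A μ && evf (s ∪ {(v, h)}) B μ) :=
  single_tuple_transformation_not_mem_general hvr hvA (fun hvB => hvs (hB hvB)) s μ
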